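/- Let Ω ⊊ ℝⁿ (n ≥ 2) be a proper subdomain and x ∈ Ω. Then the j-metric ball B_j(x,r) = { y ∈ Ω : j_Ω(x,y) < r } is convex for every r ∈ (0, log 2], and strictly starlike with respect to x for every r ∈ (0, log(1+√2)]. -/

import Mathlib

open Set Metric MeasureTheory

noncomputable section

variable {E : Type*} [NormedAddCommGroup E] [NormedSpace ℝ E]

/-- The quasihyperbolic length of a path `γ` (parametrized on `[0,1]`) in the
domain `Ω`: the integral of `‖γ'(t)‖ / d(γ(t), ∂Ω)`. -/
def qhLength (Ω : Set E) (γ : ℝ → E) : ℝ :=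
  ∫ t in (0:ℝ)..1, ‖deriv γ t‖ / infDist (γ t) (frontier Ω)

/-- A rectifiable curve in `Ω` joining `x` and `y`, formalized as a map on `[0,1]`
which is Lipschitz on `[0,1]` (every rectifiable curve admits such a
parametrization), takes values in `Ω`, and joins `x` to `y`. -/
def IsRectPath (Ω : Set E) (x y : E) (γ : ℝ → E) : Prop :=
  (∃ K : NNReal, LipschitzOnWith K γ (Icc 0 1)) ∧
    MapsTo γ (Icc 0 1) Ω ∧ γ 0 = x ∧ γ 1 = y

/-- The quasihyperbolic metric on `Ω`. -/
def qhDist (Ω : Set E) (x y : E) : ℝ :=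
  sInf (qhLength Ω '' {γ | IsRectPath Ω x y γ})

/-- The quasihyperbolic ball. -/
def qhBall (Ω : Set E) (x : E) (r : ℝ) : Set E :=
  {y ∈ Ω | qhDist Ω x y < r}

/-- The distance ratio metric (`j`-metric) on `Ω`. -/
def jDist (Ω : Set E) (x y : E) : ℝ :=
  Real.log (1 + dist x y / min (infDist x (frontier Ω)) (infDist y (frontier Ω)))

/-- The `j`-metric ball. -/
def jBall (Ω : Set E) (x : E) (r : ℝ) : Set E :=
  {y ∈ Ω | jDist Ω x y < r}

/-- `G` is strictly starlike with respect to `x`: it is starlike with respect to `x`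
and every half-line emanating from `x` meets `∂G` at exactly one point. -/
def StrictlyStarlike (G : Set E) (x : E) : Prop :=
  StarConvex ℝ x G ∧
    ∀ v : E, v ≠ 0 → ∃! p : E, p ∈ frontier G ∧ ∃ t : ℝ, 0 < t ∧ p = x + t • v

/-- `G` is strictly convex: it is strictly starlike with respect to each of its points. -/
def StrictlyConvexSet (G : Set E) : Prop :=
  ∀ x ∈ G, StrictlyStarlike G x

/-- A half-line: `{t • v + z : t > 0}` or `{t • v + z : t ≥ 0}` with `v ≠ 0`. -/
def IsHalfline (L : Set E) : Prop :=
  ∃ z v : E, v ≠ 0 ∧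
    (L = {p | ∃ t : ℝ, 0 < t ∧ p = t • v + z} ∨
      L = {p | ∃ t : ℝ, 0 ≤ t ∧ p = t • v + z})

/-- `G` is close-to-convex: its complement can be covered with pairwise
non-intersecting half-lines. -/
def CloseToConvex (G : Set E) : Prop :=
  ∃ 𝒮 : Set (Set E), (∀ L ∈ 𝒮, IsHalfline L) ∧ 𝒮.PairwiseDisjoint id ∧ Gᶜ = ⋃₀ 𝒮

end

/-!
Put `R = exp r - 1`. Then `j(x, y) < r` says that `|x - y| < R d(x)` and `|x - y| < R d(y)`, where
`d` is the distance to `∂Ω`. The first condition describes a Euclidean ball and the second one is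
`0 < R² d(y)² - |x - y|²`. For fixed `p` the parallelogram law makes
`R² |y - p|² - |x - y|²` strongly concave in `y` with the (possibly negative) modulus `2 (1 - R²)`,
and this survives taking the infimum over `p ∈ ∂Ω`. For `R ≤ 1` the modulus is
nonnegative, so the ball is convex. For `R² ≤ 2` the loss of concavity along a segment issuing from
`x` is bounded by the value `R² d(x)²` at the center, so the segment stays inside the ball even when
its other endpoint is only in the closure.
-/

section Topology

lemma subset_of_isPreconnected_of_disjoint_frontier {X : Type*} [TopologicalSpace X] {s t : Set X}
    (hs : IsPreconnected s) (ht : IsOpen t) (hst : (s ∩ t).Nonempty)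
    (hfr : Disjoint s (frontier t)) : s ⊆ t := by
  refine hs.subset_of_closure_inter_subset ht hst fun z ⟨hzt, hzs⟩ ↦ ?_
  by_contra hz
  exact hfr.notMem_of_mem_left hzs (ht.frontier_eq ▸ ⟨hzt, hz⟩)

lemma infDist_frontier_pos {X : Type*} [PseudoMetricSpace X] [PreconnectedSpace X] {s : Set X}
    (hs : IsOpen s) (hne : s ≠ univ) {x : X} (hx : x ∈ s) : 0 < infDist x (frontier s) :=
  (isClosed_frontier.notMem_iff_infDist_pos (nonempty_frontier_iff.2 ⟨⟨x, hx⟩, hne⟩)).1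
    ((disjoint_frontier_iff_isOpen.2 hs).notMem_of_mem_right hx)

end Topology

section Metric

variable {X : Type*} [PseudoMetricSpace X]

/-- The quantity `R² d(y, S)² - |x - y|²`, which is positive exactly when `|x - y| < R d(y, S)`
(for `R ≥ 0`). Squaring the distances makes it strongly concave in `y` with modulus
`2 (1 - R²)`. -/
noncomputable def jGap (S : Set X) (x : X) (R : ℝ) (y : X) : ℝ :=
  R ^ 2 * infDist y S ^ 2 - dist y x ^ 2

/-- The points `y` with `|x - y| < R d(x, S)` and `|x - y| < R d(y, S)`, the second condition being
expressed through `jGap` (so `R ≥ 0` is understood). For `S = ∂Ω` and `R = exp r - 1` these are the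
inequalities that define the `j`-ball of radius `r`, without the requirement `y ∈ Ω`. -/
def jRegion (S : Set X) (x : X) (R : ℝ) : Set X :=
  ball x (R * infDist x S) ∩ {y | 0 < jGap S x R y}

variable {S : Set X} {x y : X} {R : ℝ}

lemma jGap_self (S : Set X) (x : X) (R : ℝ) : jGap S x R x = (R * infDist x S) ^ 2 := by
  simp only [jGap, dist_self, mul_pow]
  ring

lemma jGap_pos_iff (hR : 0 ≤ R) : 0 < jGap S x R y ↔ dist y x < R * infDist y S := by
  rw [jGap, sub_pos, ← mul_pow,
    pow_lt_pow_iff_left₀ dist_nonneg (mul_nonneg hR infDist_nonneg) two_ne_zero]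

lemma continuous_jGap (S : Set X) (x : X) (R : ℝ) : Continuous (jGap S x R) := by
  have := continuous_infDist_pt S
  unfold jGap
  fun_prop

lemma mem_jRegion_self (hR : 0 < R) (hx : 0 < infDist x S) : x ∈ jRegion S x R := by
  refine ⟨mem_ball_self (by positivity), ?_⟩
  rw [mem_ofPred_eq, jGap_self]
  positivity

lemma isOpen_jRegion (S : Set X) (x : X) (R : ℝ) : IsOpen (jRegion S x R) :=
  isOpen_ball.inter (isOpen_lt continuous_const (continuous_jGap S x R))

lemma closure_jRegion_subset (S : Set X) (x : X) (R : ℝ) :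
    closure (jRegion S x R) ⊆ closedBall x (R * infDist x S) ∩ {y | 0 ≤ jGap S x R y} :=
  closure_minimal (inter_subset_inter ball_subset_closedBall fun y (hy : 0 < jGap S x R y) ↦ hy.le)
    (isClosed_closedBall.inter (isClosed_le continuous_const (continuous_jGap S x R)))

lemma disjoint_jRegion (S : Set X) (x : X) (R : ℝ) : Disjoint (jRegion S x R) S := by
  refine disjoint_left.2 fun p hp hpS ↦ not_le.2 (mem_ofPred.1 hp.2) ?_
  simp only [jGap, infDist_zero_of_mem hpS]
  nlinarith [sq_nonneg (dist p x)]

end Metric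

lemma jDist_lt_iff_mem_jRegion {E : Type*} [NormedAddCommGroup E] {Ω : Set E} {x y : E} {r : ℝ}
    (hr : 0 < r) (hx : 0 < infDist x (frontier Ω)) (hy : 0 < infDist y (frontier Ω)) :
    jDist Ω x y < r ↔ y ∈ jRegion (frontier Ω) x (Real.exp r - 1) := by
  have hR : 0 ≤ Real.exp r - 1 := sub_nonneg.2 (Real.one_le_exp hr.le)
  have h_min := lt_min hx hy
  rw [jDist, Real.log_lt_iff_lt_exp (by positivity), ← lt_sub_iff_add_lt', div_lt_iff₀ h_min,
    mul_min_of_nonneg _ _ hR, lt_min_iff, jRegion, mem_inter_iff, mem_ball, mem_ofPred_eq,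
    jGap_pos_iff hR, dist_comm x y]

section Starlike

variable {E : Type*} [NormedAddCommGroup E] [NormedSpace ℝ E] {G : Set E} {x : E}

lemma exists_pos_add_smul_mem_frontier (hG : IsOpen G) (hb : Bornology.IsBounded G) (hx : x ∈ G)
    {v : E} (hv : v ≠ 0) : ∃ t : ℝ, 0 < t ∧ x + t • v ∈ frontier G := by
  have hx_fr : x ∉ frontier G := (disjoint_frontier_iff_isOpen.2 hG).notMem_of_mem_right hx
  by_contra! h_avoid
  have h_ray : (fun t : ℝ ↦ x + t • v) '' Ici 0 ⊆ G := by
    refine subset_of_isPreconnected_of_disjoint_frontier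
      (isPreconnected_Ici.image _ (by fun_prop)) hG ⟨x, ⟨0, by simp⟩, hx⟩ ?_
    rw [disjoint_left]
    rintro _ ⟨t, ht, rfl⟩
    rcases (mem_Ici.1 ht).eq_or_lt with rfl | ht_pos
    · simpa using hx_fr
    · exact h_avoid t ht_pos
  obtain ⟨ρ, hρ, hGρ⟩ := hb.subset_ball_lt 0 x
  have h_far := hGρ (h_ray ⟨ρ / ‖v‖, by simp only [mem_Ici]; positivity, rfl⟩)
  rw [mem_ball, dist_self_add_left, norm_smul, Real.norm_of_nonneg (by positivity),
    div_mul_cancel₀ _ (norm_ne_zero_iff.2 hv)] at h_far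
  exact h_far.false

lemma strictlyStarlike_of_openSegment_subset (hG : IsOpen G) (hb : Bornology.IsBounded G)
    (hx : x ∈ G) (hseg : ∀ y ∈ closure G, openSegment ℝ x y ⊆ G) : StrictlyStarlike G x := by
  have h_not_between : ∀ {v : E} {s t : ℝ}, 0 < s → x + s • v ∈ frontier G →
      x + t • v ∈ frontier G → ¬ s < t := by
    intro v s t hs hs_fr ht_fr hst
    have ht : 0 < t := hs.trans hst
    refine (disjoint_frontier_iff_isOpen.2 hG).notMem_of_mem_left hs_fr
      (hseg _ (frontier_subset_closure ht_fr) ?_)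
    rw [openSegment_eq_image']
    refine ⟨s / t, ⟨by positivity, (div_lt_one ht).2 hst⟩, ?_⟩
    simp only [add_sub_cancel_left, smul_smul, div_mul_cancel₀ _ ht.ne']
  refine ⟨(starConvex_iff_openSegment_subset hx).2 fun y hy ↦ hseg y (subset_closure hy),
    fun v hv ↦ ?_⟩
  obtain ⟨t, ht, ht_fr⟩ := exists_pos_add_smul_mem_frontier hG hb hx hv
  refine ⟨x + t • v, ⟨ht_fr, t, ht, rfl⟩, ?_⟩
  rintro _ ⟨hs_fr, s, hs, rfl⟩
  rw [le_antisymm (not_lt.1 (h_not_between ht ht_fr hs_fr))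
    (not_lt.1 (h_not_between hs hs_fr ht_fr))]

end Starlike

section InnerProductSpace

variable {F : Type*} [NormedAddCommGroup F] [InnerProductSpace ℝ F]

lemma dist_smul_add_smul_sq {a b : ℝ} (hab : a + b = 1) (y z p : F) :
    dist (a • y + b • z) p ^ 2 =
      a * dist y p ^ 2 + b * dist z p ^ 2 - a * b * dist y z ^ 2 := by
  obtain rfl : b = 1 - a := by linarith
  have h_comb : a • y + (1 - a) • z - p = a • (y - p) + (1 - a) • (z - p) := by module
  have h_diff : y - z = (y - p) - (z - p) := by abel
  simp only [dist_eq_norm]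
  rw [h_comb, h_diff, norm_add_sq_real, norm_sub_sq_real (y - p) (z - p), norm_smul, norm_smul,
    real_inner_smul_left, real_inner_smul_right, mul_pow, mul_pow, Real.norm_eq_abs,
    Real.norm_eq_abs, sq_abs, sq_abs]
  ring

lemma strongConcaveOn_infDist_sq (S : Set F) :
    StrongConcaveOn univ (-2) fun y ↦ infDist y S ^ 2 := by
  refine ⟨convex_univ, fun y _ z _ a b ha hb hab ↦ ?_⟩
  simp only [smul_eq_mul, ← dist_eq_norm]
  rcases S.eq_empty_or_nonempty with rfl | hS
  · simp only [infDist_empty]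
    nlinarith [mul_nonneg (mul_nonneg ha hb) (sq_nonneg (dist y z))]
  refine (Real.sqrt_le_left infDist_nonneg).1 ((le_infDist hS).2 fun p hp ↦ ?_)
  rw [Real.sqrt_le_left dist_nonneg, dist_smul_add_smul_sq hab]
  have hy := pow_le_pow_left₀ infDist_nonneg (infDist_le_dist_of_mem (x := y) hp) 2
  have hz := pow_le_pow_left₀ infDist_nonneg (infDist_le_dist_of_mem (x := z) hp) 2
  linarith [mul_le_mul_of_nonneg_left hy ha, mul_le_mul_of_nonneg_left hz hb]

variable {S Ω : Set F} {x y : F} {R r : ℝ}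

lemma strongConcaveOn_jGap (S : Set F) (x : F) (R : ℝ) :
    StrongConcaveOn univ (2 * (1 - R ^ 2)) (jGap S x R) := by
  refine ⟨convex_univ, fun y hy z hz a b ha hb hab ↦ ?_⟩
  have h_infDist := mul_le_mul_of_nonneg_left
    ((strongConcaveOn_infDist_sq S).2 hy hz ha hb hab) (sq_nonneg R)
  have h_dist := dist_smul_add_smul_sq hab y z x
  simp only [jGap, smul_eq_mul, ← dist_eq_norm] at h_infDist ⊢
  linarith

lemma convex_jRegion (S : Set F) (x : F) (hR : R ^ 2 ≤ 1) : Convex ℝ (jRegion S x R) := by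
  have h_concave : ConcaveOn ℝ univ (jGap S x R) :=
    strongConcaveOn_zero.1 ((strongConcaveOn_jGap S x R).mono (by linarith))
  refine (convex_ball x (R * infDist x S)).inter ?_
  simpa only [mem_univ, true_and] using h_concave.convex_gt 0

-- Strong concavity bounds the gap at `a • x + b • y` below by `a M - a b M = a² M`, where
-- `M = (R * infDist x S) ^ 2` is the gap at `x`.
lemma openSegment_subset_jRegion (hR : 0 < R) (hR2 : R ^ 2 ≤ 2) (hx : 0 < infDist x S)
    (hy : y ∈ closedBall x (R * infDist x S)) (hgap : 0 ≤ jGap S x R y) :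
    openSegment ℝ x y ⊆ jRegion S x R := by
  have hM : 0 < R * infDist x S := by positivity
  have h_ball : openSegment ℝ x y ⊆ ball x (R * infDist x S) := by
    rw [← interior_closedBall x hM.ne']
    refine (convex_closedBall x _).openSegment_interior_self_subset_interior ?_ hy
    exact interior_mono ball_subset_closedBall (by simpa [isOpen_ball.interior_eq] using hM)
  refine fun q hq ↦ ⟨h_ball hq, ?_⟩
  obtain ⟨a, b, ha, hb, hab, rfl⟩ := hq
  have h_concave := (strongConcaveOn_jGap S x R).2 (mem_univ x) (mem_univ y) ha.le hb.le hab
  have h_loss : -(R * infDist x S) ^ 2 ≤ (1 - R ^ 2) * dist x y ^ 2 := by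
    have h_dist := pow_le_pow_left₀ dist_nonneg (mem_closedBall'.1 hy) 2
    linarith [mul_nonneg (sub_nonneg.2 hR2) (sq_nonneg (dist x y))]
  rw [mem_ofPred_eq]
  rw [jGap_self, ← dist_eq_norm, mul_div_cancel_left₀ _ two_ne_zero, smul_eq_mul,
    smul_eq_mul] at h_concave
  calc
    0 < a ^ 2 * (R * infDist x S) ^ 2 := by positivity
    _ = a * (R * infDist x S) ^ 2 + a * b * -(R * infDist x S) ^ 2 := by
      rw [eq_sub_of_add_eq' hab]; ring
    _ ≤ a * (R * infDist x S) ^ 2 + b * jGap S x R y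
          + a * b * ((1 - R ^ 2) * dist x y ^ 2) := by
      gcongr
      exact le_add_of_nonneg_right (by positivity)
    _ ≤ jGap S x R (a • x + b • y) := h_concave

lemma strictlyStarlike_jRegion (hR : 0 < R) (hR2 : R ^ 2 ≤ 2) (hx : 0 < infDist x S) :
    StrictlyStarlike (jRegion S x R) x :=
  strictlyStarlike_of_openSegment_subset (isOpen_jRegion S x R)
    (isBounded_ball.subset inter_subset_left) (mem_jRegion_self hR hx) fun _ hy ↦
      openSegment_subset_jRegion hR hR2 hx (closure_jRegion_subset S x R hy).1
        (closure_jRegion_subset S x R hy).2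

lemma jRegion_frontier_subset (hΩ : IsOpen Ω) (hne : Ω ≠ univ) (hx : x ∈ Ω) (hR : 0 < R)
    (hR2 : R ^ 2 ≤ 2) : jRegion (frontier Ω) x R ⊆ Ω := by
  have hx_pos := infDist_frontier_pos hΩ hne hx
  have hx_mem := mem_jRegion_self hR hx_pos
  have h_star := (strictlyStarlike_jRegion hR hR2 hx_pos).1
  exact subset_of_isPreconnected_of_disjoint_frontier
    (h_star.isPathConnected hx_mem).isConnected.isPreconnected hΩ ⟨x, hx_mem, hx⟩
    (disjoint_jRegion _ x R)

lemma jBall_eq_jRegion (hΩ : IsOpen Ω) (hne : Ω ≠ univ) (hx : x ∈ Ω) (hr : 0 < r)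
    (hR2 : (Real.exp r - 1) ^ 2 ≤ 2) :
    jBall Ω x r = jRegion (frontier Ω) x (Real.exp r - 1) := by
  have hR : 0 < Real.exp r - 1 := sub_pos.2 (Real.one_lt_exp_iff.2 hr)
  have h_mem : ∀ y ∈ Ω, (jDist Ω x y < r ↔ y ∈ jRegion (frontier Ω) x (Real.exp r - 1)) :=
    fun y hy ↦ jDist_lt_iff_mem_jRegion hr (infDist_frontier_pos hΩ hne hx)
      (infDist_frontier_pos hΩ hne hy)
  ext y
  refine ⟨fun ⟨hy, h⟩ ↦ (h_mem y hy).1 h, fun h ↦ ?_⟩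
  have hy := jRegion_frontier_subset hΩ hne hx hR hR2 h
  exact ⟨hy, (h_mem y hy).2 h⟩

end InnerProductSpace

theorem j_ball_convex_starlike_general {F : Type*} [NormedAddCommGroup F] [InnerProductSpace ℝ F]
    {Ω : Set F} (hΩ : IsOpen Ω) (hne : Ω ≠ univ) {x : F} (hx : x ∈ Ω) {r : ℝ} (hr : 0 < r) :
    (r ≤ Real.log 2 → Convex ℝ (jBall Ω x r)) ∧
      (r ≤ Real.log (1 + Real.sqrt 2) → StrictlyStarlike (jBall Ω x r) x) := by
  have hR : 0 < Real.exp r - 1 := sub_pos.2 (Real.one_lt_exp_iff.2 hr)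
  refine ⟨fun hr_log ↦ ?_, fun hr_log ↦ ?_⟩
  · have h_exp : Real.exp r ≤ 2 := (Real.le_log_iff_exp_le two_pos).1 hr_log
    have hR1 : (Real.exp r - 1) ^ 2 ≤ 1 := pow_le_one₀ hR.le (by linarith)
    rw [jBall_eq_jRegion hΩ hne hx hr (by linarith)]
    exact convex_jRegion _ x hR1
  · have h_exp : Real.exp r ≤ 1 + Real.sqrt 2 :=
      (Real.le_log_iff_exp_le (by positivity)).1 hr_log
    have hR2 : (Real.exp r - 1) ^ 2 ≤ 2 := (Real.le_sqrt' hR).1 (by linarith)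
    rw [jBall_eq_jRegion hΩ hne hx hr hR2]
    exact strictlyStarlike_jRegion hR hR2 (infDist_frontier_pos hΩ hne hx)

/-- in any proper subdomain of `ℝⁿ`, `j`-metric balls are convex for
radii `r ≤ log 2` and strictly starlike with respect to their center for radii
`r ≤ log(1+√2)`. -/
theorem j_ball_convex_starlike (n : ℕ) (hn : 2 ≤ n)
    (Ω : Set (EuclideanSpace ℝ (Fin n)))
    (hopen : IsOpen Ω) (hconn : IsConnected Ω) (hproper : Ω ≠ univ)
    (x : EuclideanSpace ℝ (Fin n)) (hx : x ∈ Ω) (r : ℝ) (hr0 : 0 < r) :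
    (r ≤ Real.log 2 → Convex ℝ (jBall Ω x r)) ∧
      (r ≤ Real.log (1 + Real.sqrt 2) → StrictlyStarlike (jBall Ω x r) x) := by
  exact j_ball_convex_starlike_general hopen hproper hx hr0
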